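/- arXiv:2305.04560 — 3 statements merged into one kernel-verified Lean document; each statement's English description precedes it below -/
import Mathlib

section
/- The scalar multiplication t ⊗_lt U = t⌊U⌋ + 𝔻(U)^t turns (L⁺_n, ⊕_lt) into a gyrovector space with trivial gyroautomorphisms: for all s, t ∈ ℝ and U ∈ L⁺_n one has t ⊗_lt U ∈ L⁺_n, 1 ⊗_lt U = U, 0 ⊗_lt U = I_n, (−1) ⊗_lt U = ⊖_lt U = −⌊U⌋ + 𝔻(U)⁻¹, (s+t) ⊗_lt U = (s ⊗_lt U) ⊕_lt (t ⊗_lt U), and (st) ⊗_lt U = s ⊗_lt (t ⊗_lt U). (Appendix C of the paper.) -/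
/-!
The map `U ↦ (⌊U⌋, 𝔻(U))` identifies `L⁺_n` with the product of the additive group of strictly lower
triangular matrices and a power of the multiplicative group of positive reals. Under it `⊕_lt` acts
as addition on the first factor and multiplication on the second, and `t ⊗_lt U` becomes
`(t⌊U⌋, 𝔻(U)^t)`. The claims are therefore the laws of a real vector space on the first factor and
the laws of real exponents on the second.
-/

open Matrix

/-- `L⁺_n`: real lower triangular `n × n` matrices with positive diagonal entries. -/
def lowerPos {n : ℕ} (U : Matrix (Fin n) (Fin n) ℝ) : Prop :=
  (∀ i j : Fin n, i < j → U i j = 0) ∧ ∀ i : Fin n, 0 < U i i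

/-- `⌊U⌋`: the strictly lower triangular part of `U`. -/
def slt {n : ℕ} (U : Matrix (Fin n) (Fin n) ℝ) : Matrix (Fin n) (Fin n) ℝ :=
  Matrix.of fun i j => if j < i then U i j else 0

/-- `𝔻(U)`: the diagonal matrix with the same diagonal as `U`. -/
def dlt {n : ℕ} (U : Matrix (Fin n) (Fin n) ℝ) : Matrix (Fin n) (Fin n) ℝ :=
  Matrix.diagonal fun i => U i i

/-- The Log-Cholesky binary operation `U ⊕_lt V = ⌊U⌋ + ⌊V⌋ + 𝔻(U)𝔻(V)`. -/
def oplusLT {n : ℕ} (U V : Matrix (Fin n) (Fin n) ℝ) : Matrix (Fin n) (Fin n) ℝ :=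
  slt U + slt V + dlt U * dlt V

/-- The Log-Cholesky inverse `⊖_lt U = −⌊U⌋ + 𝔻(U)⁻¹`. -/
noncomputable def negLT {n : ℕ} (U : Matrix (Fin n) (Fin n) ℝ) : Matrix (Fin n) (Fin n) ℝ :=
  -slt U + Matrix.diagonal fun i => (U i i)⁻¹

/-- The Log-Cholesky scalar multiplication `t ⊗_lt U = t⌊U⌋ + 𝔻(U)^t`. -/
noncomputable def smulLT {n : ℕ} (t : ℝ) (U : Matrix (Fin n) (Fin n) ℝ) :
    Matrix (Fin n) (Fin n) ℝ :=
  t • slt U + Matrix.diagonal fun i => (U i i) ^ t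

/-- The Log-Cholesky inner product
`⟨U,V⟩_L = ⟨⌊U⌋,⌊V⌋⟩_F + Σ_i log(U i i)·log(V i i)`. -/
noncomputable def innerL {n : ℕ} (U V : Matrix (Fin n) (Fin n) ℝ) : ℝ :=
  Matrix.trace ((slt U)ᵀ * slt V) + ∑ i : Fin n, Real.log (U i i) * Real.log (V i i)

/-- The Log-Cholesky norm `∥U∥_L = ⟨U,U⟩_L^{1/2}`. -/
noncomputable def normL {n : ℕ} (U : Matrix (Fin n) (Fin n) ℝ) : ℝ :=
  Real.sqrt (innerL U U)

section StrictlyLowerPart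

variable {n : ℕ} (A : Matrix (Fin n) (Fin n) ℝ)

theorem slt_apply_of_le {i j : Fin n} (hij : i ≤ j) : slt A i j = 0 :=
  if_neg hij.not_gt

theorem slt_add_diagonal (d : Fin n → ℝ) : slt (A + diagonal d) = slt A := by
  ext i j
  rcases lt_or_ge j i with hji | hij
  · simp [slt, diagonal_apply_ne d hji.ne']
  · simp only [slt_apply_of_le _ hij]

theorem slt_smul (t : ℝ) : slt (t • A) = t • slt A := by
  ext i j
  exact (smul_ite_zero (j < i) t (A i j)).symm

theorem slt_slt : slt (slt A) = slt A := by
  ext i j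
  rcases lt_or_ge j i with hji | hij
  · simp [slt, hji]
  · simp only [slt_apply_of_le _ hij]

variable {A}

theorem slt_add_dlt (hA : ∀ i j, i < j → A i j = 0) : slt A + dlt A = A := by
  ext i j
  rcases lt_trichotomy i j with hij | rfl | hji
  · simp [slt_apply_of_le A hij.le, dlt, hij.ne, hA i j hij]
  · simp [slt_apply_of_le A le_rfl, dlt]
  · simp [slt, dlt, hji, hji.ne']

end StrictlyLowerPart

section ScalarMultiplication

variable {n : ℕ} (s t : ℝ) (U : Matrix (Fin n) (Fin n) ℝ)

theorem slt_smulLT : slt (smulLT t U) = t • slt U := by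
  rw [smulLT, slt_add_diagonal, slt_smul, slt_slt]

theorem smulLT_apply_self (i : Fin n) : smulLT t U i i = U i i ^ t := by
  simp [smulLT, slt_apply_of_le U le_rfl]

theorem smulLT_apply_of_lt {i j : Fin n} (hij : i < j) : smulLT t U i j = 0 := by
  simp [smulLT, slt_apply_of_le U hij.le, hij.ne]

theorem dlt_smulLT : dlt (smulLT t U) = diagonal fun i => U i i ^ t := by
  simp only [dlt, smulLT_apply_self]

theorem zero_smulLT : smulLT 0 U = 1 := by
  simp only [smulLT, zero_smul, Real.rpow_zero, diagonal_one, zero_add]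

theorem neg_one_smulLT : smulLT (-1) U = negLT U := by
  simp only [smulLT, negLT, neg_one_smul, Real.rpow_neg_one]

variable {U}

theorem lowerPos_smulLT (hU : ∀ i, 0 < U i i) : lowerPos (smulLT t U) := by
  refine ⟨fun _ _ => smulLT_apply_of_lt t U, fun i => ?_⟩
  rw [smulLT_apply_self]
  exact Real.rpow_pos_of_pos (hU i) t

theorem one_smulLT (hU : ∀ i j, i < j → U i j = 0) : smulLT 1 U = U :=
  calc
    smulLT 1 U = slt U + dlt U := by simp only [smulLT, one_smul, Real.rpow_one, dlt]
    _ = U := slt_add_dlt hU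

theorem add_smulLT (hU : ∀ i, 0 < U i i) :
    smulLT (s + t) U = oplusLT (smulLT s U) (smulLT t U) :=
  calc
    smulLT (s + t) U
      = s • slt U + t • slt U + diagonal fun i => U i i ^ s * U i i ^ t := by
        simp only [smulLT, add_smul, Real.rpow_add (hU _)]
    _ = slt (smulLT s U) + slt (smulLT t U) + dlt (smulLT s U) * dlt (smulLT t U) := by
        simp only [slt_smulLT, dlt_smulLT, diagonal_mul_diagonal]
    _ = oplusLT (smulLT s U) (smulLT t U) := rfl

theorem mul_smulLT (hU : ∀ i, 0 ≤ U i i) :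
    smulLT (s * t) U = smulLT s (smulLT t U) :=
  calc
    smulLT (s * t) U = s • t • slt U + diagonal fun i => (U i i ^ t) ^ s := by
        simp only [smulLT, mul_smul, ← Real.rpow_mul (hU _), mul_comm t s]
    _ = s • slt (smulLT t U) + diagonal fun i => smulLT t U i i ^ s := by
        simp only [slt_smulLT, smulLT_apply_self]
    _ = smulLT s (smulLT t U) := rfl

end ScalarMultiplication

/-- The scalar multiplication `t ⊗_lt U = t⌊U⌋ + 𝔻(U)^t` turns
`(L⁺_n, ⊕_lt)` into a gyrovector space with trivial gyroautomorphisms: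
closure, `1 ⊗_lt U = U`, `0 ⊗_lt U = I_n`, `(−1) ⊗_lt U = ⊖_lt U = −⌊U⌋ + 𝔻(U)⁻¹`,
`(s+t) ⊗_lt U = (s ⊗_lt U) ⊕_lt (t ⊗_lt U)`, and `(st) ⊗_lt U = s ⊗_lt (t ⊗_lt U)`. -/
theorem smulLT_gyrovector_space {n : ℕ} (s t : ℝ) (U : Matrix (Fin n) (Fin n) ℝ)
    (hU : lowerPos U) :
    lowerPos (smulLT t U) ∧
    smulLT 1 U = U ∧
    smulLT 0 U = 1 ∧
    smulLT (-1) U = negLT U ∧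
    negLT U = -slt U + Matrix.diagonal (fun i => (U i i)⁻¹) ∧
    smulLT (s + t) U = oplusLT (smulLT s U) (smulLT t U) ∧
    smulLT (s * t) U = smulLT s (smulLT t U) :=
  ⟨lowerPos_smulLT t hU.2, one_smulLT hU.1, zero_smulLT U, neg_one_smulLT U, rfl,
    add_smulLT s t hU.2, mul_smulLT s t fun i => (hU.2 i).le⟩
end

section
/- Law of gyrocosines for the Log-Cholesky geometry: let P, Q, R ∈ L⁺_n be pairwise distinct, set P̃ = ⊖_lt Q ⊕_lt R, Q̃ = ⊖_lt P ⊕_lt R, R̃ = ⊖_lt P ⊕_lt Q, p = ∥P̃∥_L, q = ∥Q̃∥_L, r = ∥R̃∥_L, and cos α = ⟨R̃, Q̃⟩_L/(r·q) (the gyrocosine of the gyroangle at the vertex P; p, q, r are nonzero since the points are pairwise distinct). Then p² = q² + r² − 2·q·r·cos α. (Theorem 4.7 of the paper, the Law of SPD Gyrocosines, for the Log-Cholesky metric in Cholesky-factor coordinates.) -/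
/-!
Recording `⌊U⌋` and the logarithms of the diagonal of `U` as Euclidean coordinates turns `⊕_lt` into
addition, because `log` turns products into sums, and turns `⟨·,·⟩_L` into the Euclidean inner
product. Hence `∥⊖_lt U ⊕_lt V∥_L` is the Euclidean distance between the coordinates of `U` and `V`,
the gyrocosine at `P` is the cosine of the Euclidean angle at the coordinates of `P`, and the law of
gyrocosines is the Euclidean law of cosines.
-/

open Matrix

section LogCholeskyCoord

variable {n : ℕ}

lemma lowerPos.diag_ne_zero {U : Matrix (Fin n) (Fin n) ℝ} (hU : lowerPos U) (i : Fin n) :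
    U i i ≠ 0 :=
  (hU.2 i).ne'

lemma slt_oplusLT (U V : Matrix (Fin n) (Fin n) ℝ) : slt (oplusLT U V) = slt U + slt V := by
  ext i j
  by_cases hij : j < i
  · simp [slt, oplusLT, dlt, hij, hij.ne']
  · simp [slt, hij]

lemma slt_negLT (U : Matrix (Fin n) (Fin n) ℝ) : slt (negLT U) = -slt U := by
  ext i j
  by_cases hij : j < i
  · simp [slt, negLT, hij, hij.ne']
  · simp [slt, hij]

lemma oplusLT_apply_self (U V : Matrix (Fin n) (Fin n) ℝ) (i : Fin n) :
    oplusLT U V i i = U i i * V i i := by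
  simp [oplusLT, slt, dlt]

lemma negLT_apply_self (U : Matrix (Fin n) (Fin n) ℝ) (i : Fin n) :
    negLT U i i = (U i i)⁻¹ := by
  simp [negLT, slt]

/-- The Log-Cholesky coordinates `(⌊U⌋, log 𝔻(U))` of `U`, with `⌊U⌋` flattened to a vector. The
`L²` product makes the Euclidean inner product of coordinates equal to `⟨·,·⟩_L`. -/
noncomputable def logCholeskyCoord (U : Matrix (Fin n) (Fin n) ℝ) :
    WithLp 2 (EuclideanSpace ℝ (Fin n × Fin n) × EuclideanSpace ℝ (Fin n)) :=
  WithLp.toLp 2 (WithLp.toLp 2 (slt U).vec, WithLp.toLp 2 fun i => Real.log (U i i))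

lemma logCholeskyCoord_oplusLT {U V : Matrix (Fin n) (Fin n) ℝ}
    (hU : ∀ i, U i i ≠ 0) (hV : ∀ i, V i i ≠ 0) :
    logCholeskyCoord (oplusLT U V) = logCholeskyCoord U + logCholeskyCoord V := by
  have hlog : (fun i => Real.log (oplusLT U V i i)) =
      (fun i => Real.log (U i i)) + fun i => Real.log (V i i) := by
    ext i
    simp only [oplusLT_apply_self, Real.log_mul (hU i) (hV i), Pi.add_apply]
  simp only [logCholeskyCoord, slt_oplusLT, Matrix.vec_add, hlog, WithLp.toLp_add,
    ← Prod.mk_add_mk]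

lemma logCholeskyCoord_negLT (U : Matrix (Fin n) (Fin n) ℝ) :
    logCholeskyCoord (negLT U) = -logCholeskyCoord U := by
  have hlog : (fun i => Real.log (negLT U i i)) = -fun i => Real.log (U i i) := by
    ext i
    simp only [negLT_apply_self, Real.log_inv, Pi.neg_apply]
  simp only [logCholeskyCoord, slt_negLT, Matrix.vec_neg, hlog, WithLp.toLp_neg, ← Prod.neg_mk]

lemma logCholeskyCoord_negLT_oplusLT {U V : Matrix (Fin n) (Fin n) ℝ}
    (hU : ∀ i, U i i ≠ 0) (hV : ∀ i, V i i ≠ 0) :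
    logCholeskyCoord (oplusLT (negLT U) V) = logCholeskyCoord V - logCholeskyCoord U := by
  have hU_neg (i : Fin n) : negLT U i i ≠ 0 := by
    rw [negLT_apply_self]
    exact inv_ne_zero (hU i)
  rw [logCholeskyCoord_oplusLT hU_neg hV, logCholeskyCoord_negLT, neg_add_eq_sub]

lemma innerL_eq_inner (U V : Matrix (Fin n) (Fin n) ℝ) :
    innerL U V = inner ℝ (logCholeskyCoord U) (logCholeskyCoord V) := by
  rw [innerL, ← Matrix.vec_dotProduct_vec, WithLp.prod_inner_apply]
  simp [logCholeskyCoord, EuclideanSpace.inner_eq_star_dotProduct, dotProduct, mul_comm]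

lemma normL_eq_norm (U : Matrix (Fin n) (Fin n) ℝ) : normL U = ‖logCholeskyCoord U‖ := by
  rw [normL, innerL_eq_inner, norm_eq_sqrt_real_inner]

lemma normL_negLT_oplusLT {U V : Matrix (Fin n) (Fin n) ℝ}
    (hU : ∀ i, U i i ≠ 0) (hV : ∀ i, V i i ≠ 0) :
    normL (oplusLT (negLT U) V) = dist (logCholeskyCoord V) (logCholeskyCoord U) := by
  rw [normL_eq_norm, logCholeskyCoord_negLT_oplusLT hU hV, dist_eq_norm]

lemma gyrocosine_eq_cos_angle {P Q R : Matrix (Fin n) (Fin n) ℝ}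
    (hP : ∀ i, P i i ≠ 0) (hQ : ∀ i, Q i i ≠ 0) (hR : ∀ i, R i i ≠ 0) :
    innerL (oplusLT (negLT P) Q) (oplusLT (negLT P) R) /
        (normL (oplusLT (negLT P) Q) * normL (oplusLT (negLT P) R)) =
      Real.cos (EuclideanGeometry.angle
        (logCholeskyCoord Q) (logCholeskyCoord P) (logCholeskyCoord R)) := by
  rw [EuclideanGeometry.angle, InnerProductGeometry.cos_angle, vsub_eq_sub, vsub_eq_sub,
    innerL_eq_inner, normL_eq_norm, normL_eq_norm, logCholeskyCoord_negLT_oplusLT hP hQ,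
    logCholeskyCoord_negLT_oplusLT hP hR]

end LogCholeskyCoord

/-- Law of gyrocosines for the Log-Cholesky geometry: with
`P̃ = ⊖_lt Q ⊕_lt R`, `Q̃ = ⊖_lt P ⊕_lt R`, `R̃ = ⊖_lt P ⊕_lt Q`, `p = ∥P̃∥_L`,
`q = ∥Q̃∥_L`, `r = ∥R̃∥_L`, and `cos α = ⟨R̃,Q̃⟩_L/(r·q)`, one has
`p² = q² + r² − 2qr·cos α`. -/
theorem law_of_gyrocosines_LC {n : ℕ} (P Q R : Matrix (Fin n) (Fin n) ℝ)
    (hP : lowerPos P) (hQ : lowerPos Q) (hR : lowerPos R)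
    (hPQ : P ≠ Q) (hPR : P ≠ R) (hQR : Q ≠ R) :
    (normL (oplusLT (negLT Q) R)) ^ 2 =
      (normL (oplusLT (negLT P) R)) ^ 2 + (normL (oplusLT (negLT P) Q)) ^ 2 -
        2 * normL (oplusLT (negLT P) R) * normL (oplusLT (negLT P) Q) *
          (innerL (oplusLT (negLT P) Q) (oplusLT (negLT P) R) /
            (normL (oplusLT (negLT P) Q) * normL (oplusLT (negLT P) R))) := by
  have hP₀ := hP.diag_ne_zero
  have hQ₀ := hQ.diag_ne_zero
  have hR₀ := hR.diag_ne_zero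
  rw [gyrocosine_eq_cos_angle hP₀ hQ₀ hR₀, EuclideanGeometry.angle_comm,
    normL_negLT_oplusLT hQ₀ hR₀, normL_negLT_oplusLT hP₀ hR₀, normL_negLT_oplusLT hP₀ hQ₀]
  simpa only [sq] using EuclideanGeometry.law_cos
    (logCholeskyCoord R) (logCholeskyCoord P) (logCholeskyCoord Q)
end

section
/- Let ψ : L⁺_n → T_n be the map ψ(U) = ⌊U⌋ + log 𝔻(U), where log 𝔻(U) is the diagonal matrix with entries log(U i i) and T_n is the space of n×n real lower triangular matrices. Let P, X ∈ L⁺_n and let B ∈ T_n with B ≠ 0. Then the infimum of ∥ψ(X) − ψ(Q)∥_F over all Q ∈ L⁺_n satisfying ⟨ψ(Q) − ψ(P), B⟩_F = 0 equals |⟨ψ(X) − ψ(P), B⟩_F| / ∥B∥_F, and this infimum is attained. (Theorem 4.10 of the paper, the SPD gyrodistance from a SPD matrix to a SPD hypergyroplane in a Log-Cholesky gyrovector space, expressed in Cholesky-factor coordinates: the Log-Cholesky gyrodistance satisfies ∥⊖_lt Q ⊕_lt X∥_L = ∥ψ(X) − ψ(Q)∥_F, and B corresponds to ⌊W̃⌋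 + 𝔻(φ(P))⁻¹𝔻(W̃).) -/
/-!
The map `ψ` carries `L⁺_n` onto the linear space `T_n`, so in the coordinate `ψ(Q)` the
hypergyroplane is an affine hyperplane of the Frobenius inner product space `T_n` with normal `B`.
On the hyperplane `⟨ψ(X) - ψ(Q), B⟩` does not depend on `Q`, so Cauchy–Schwarz bounds the distance
from below. Equality holds at the point obtained from `ψ(X)` by subtracting the orthogonal
projection of `ψ(X) - ψ(P)` onto the line `ℝ ∙ B`; as `B` lies in `T_n`, so does this point.
-/

open Matrix

/-- `ψ(U) = ⌊U⌋ + log 𝔻(U)`, mapping `L⁺_n` into the space `T_n` of lower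
triangular matrices. -/
noncomputable def psiLT {n : ℕ} (U : Matrix (Fin n) (Fin n) ℝ) :
    Matrix (Fin n) (Fin n) ℝ :=
  slt U + Matrix.diagonal fun i => Real.log (U i i)

/-- The Frobenius inner product `⟨A,B⟩_F = tr(AᵀB)`. -/
noncomputable def frobInner {n : ℕ} (A B : Matrix (Fin n) (Fin n) ℝ) : ℝ :=
  Matrix.trace (Aᵀ * B)

/-- The Frobenius norm `∥A∥_F`. -/
noncomputable def frobNorm {n : ℕ} (A : Matrix (Fin n) (Fin n) ℝ) : ℝ :=
  Real.sqrt (Matrix.trace (Aᵀ * A))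

section Hyperplane

variable {𝕜 E : Type*} [RCLike 𝕜] [NormedAddCommGroup E] [InnerProductSpace 𝕜 E]

lemma norm_starProjection_singleton (b v : E) :
    ‖(𝕜 ∙ b).starProjection v‖ = ‖inner 𝕜 v b‖ / ‖b‖ := by
  rcases eq_or_ne b 0 with rfl | hb
  · simp
  · have hb_norm : ‖b‖ ≠ 0 := norm_ne_zero_iff.mpr hb
    rw [Submodule.starProjection_singleton, norm_smul, norm_div, norm_inner_symm b v,
      RCLike.norm_ofReal, abs_of_nonneg (sq_nonneg _)]
    field_simp

theorem isLeast_norm_sub_hyperplane {K : Submodule 𝕜 E} {x b : E} (hx : x ∈ K) (hb : b ∈ K)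
    (p : E) :
    IsLeast {d : ℝ | ∃ q ∈ K, inner 𝕜 (q - p) b = 0 ∧ d = ‖x - q‖}
      (‖inner 𝕜 (x - p) b‖ / ‖b‖) := by
  constructor
  · set y := (𝕜 ∙ b).starProjection (x - p) with hy
    have hyK : y ∈ K :=
      (Submodule.span_singleton_le_iff_mem b K).mpr hb (Submodule.starProjection_apply_mem _ _)
    refine ⟨x - y, K.sub_mem hx hyK, ?_, ?_⟩
    · rw [sub_right_comm, ← Submodule.mem_orthogonal_singleton_iff_inner_left]
      exact Submodule.sub_starProjection_mem_orthogonal (x - p)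
    · rw [sub_sub_cancel, hy, norm_starProjection_singleton]
  · rintro _ ⟨q, -, hq, rfl⟩
    have hxq : inner 𝕜 (x - p) b = inner 𝕜 (x - q) b := by
      rw [← sub_add_sub_cancel x q p, inner_add_left, hq, add_zero]
    rw [hxq]
    exact div_le_of_le_mul₀ (norm_nonneg b) (norm_nonneg _) (norm_inner_le_norm _ _)

end Hyperplane

section LowerTriangular

/-- The space `T_n` of lower triangular matrices, as a submodule of all square matrices. -/
def lowerTriangularSubmodule (m R : Type*) [LT m] [Semiring R] : Submodule R (Matrix m m R) where
  carrier := {T | T.IsLowerTriangular}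
  add_mem' := BlockTriangular.add
  zero_mem' := blockTriangular_zero
  smul_mem' c T hT i j hij := by rw [Matrix.smul_apply, hT hij, smul_zero]

lemma mem_lowerTriangularSubmodule {m R : Type*} [LT m] [Semiring R] {T : Matrix m m R} :
    T ∈ lowerTriangularSubmodule m R ↔ T.IsLowerTriangular :=
  Iff.rfl

variable {n : ℕ}

/-- The inverse `T ↦ ⌊T⌋ + exp 𝔻(T)` of `ψ`, mapping `T_n` to `L⁺_n`; like `psiLT`, it is defined on
all matrices and ignores the entries above the diagonal. -/
noncomputable def expLT (T : Matrix (Fin n) (Fin n) ℝ) : Matrix (Fin n) (Fin n) ℝ :=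
  slt T + Matrix.diagonal fun i => Real.exp (T i i)

lemma slt_isLowerTriangular (U : Matrix (Fin n) (Fin n) ℝ) : (slt U).IsLowerTriangular :=
  fun _ _ hij => if_neg (OrderDual.toDual_lt_toDual.mp hij).not_gt

lemma psiLT_isLowerTriangular (U : Matrix (Fin n) (Fin n) ℝ) : (psiLT U).IsLowerTriangular :=
  (slt_isLowerTriangular U).add (blockTriangular_diagonal _)

lemma lowerPos_expLT (T : Matrix (Fin n) (Fin n) ℝ) : lowerPos (expLT T) :=
  ⟨fun _ _ hij => (slt_isLowerTriangular T).add (blockTriangular_diagonal _) hij,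
    fun i => by simp [expLT, slt, Real.exp_pos]⟩

lemma psiLT_expLT {T : Matrix (Fin n) (Fin n) ℝ} (hT : T.IsLowerTriangular) :
    psiLT (expLT T) = T := by
  ext i j
  rcases lt_trichotomy i j with hij | rfl | hji
  · rw [psiLT_isLowerTriangular (expLT T) hij, hT hij]
  · simp [psiLT, expLT, slt]
  · simp [psiLT, expLT, slt, hji, hji.ne']

theorem isLowerTriangular_iff_exists_psiLT_eq {T : Matrix (Fin n) (Fin n) ℝ} :
    T.IsLowerTriangular ↔ ∃ U, lowerPos U ∧ psiLT U = T := by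
  constructor
  · exact fun hT => ⟨expLT T, lowerPos_expLT T, psiLT_expLT hT⟩
  · rintro ⟨U, -, rfl⟩
    exact psiLT_isLowerTriangular U

end LowerTriangular

section Frobenius

variable {n : ℕ}

/-- The Frobenius norm on square matrices, in the form that Mathlib derives from the inner product
`tr(B M Aᵀ)` at `M = 1`. -/
noncomputable local instance frobNormedAddCommGroup :
    NormedAddCommGroup (Matrix (Fin n) (Fin n) ℝ) :=
  Matrix.toMatrixNormedAddCommGroup 1 PosDef.one

/-- The Frobenius inner product `tr(B Aᵀ) = tr(Aᵀ B)` on square matrices. -/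
noncomputable local instance frobInnerProductSpace :
    InnerProductSpace ℝ (Matrix (Fin n) (Fin n) ℝ) :=
  Matrix.toMatrixInnerProductSpace 1 PosSemidef.one

lemma frobInner_eq_inner (A B : Matrix (Fin n) (Fin n) ℝ) : frobInner A B = inner ℝ A B := by
  change (Aᵀ * B).trace = (B * 1 * Aᴴ).trace
  rw [mul_one, conjTranspose_eq_transpose_of_trivial, trace_mul_comm]

lemma frobNorm_eq_norm (A : Matrix (Fin n) (Fin n) ℝ) : frobNorm A = ‖A‖ := by
  rw [norm_eq_sqrt_real_inner, ← frobInner_eq_inner, frobNorm, frobInner]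

theorem isLeast_frobNorm_sub_hyperplane {K : Submodule ℝ (Matrix (Fin n) (Fin n) ℝ)}
    {X B : Matrix (Fin n) (Fin n) ℝ} (hX : X ∈ K) (hB : B ∈ K) (P : Matrix (Fin n) (Fin n) ℝ) :
    IsLeast {d : ℝ | ∃ Q ∈ K, frobInner (Q - P) B = 0 ∧ d = frobNorm (X - Q)}
      (|frobInner (X - P) B| / frobNorm B) := by
  simp only [frobInner_eq_inner, frobNorm_eq_norm, ← Real.norm_eq_abs]
  exact isLeast_norm_sub_hyperplane hX hB P

end Frobenius

/-- For `P, X ∈ L⁺_n` and a nonzero lower triangular `B ∈ T_n`, the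
infimum of `∥ψ(X) − ψ(Q)∥_F` over all `Q ∈ L⁺_n` with `⟨ψ(Q) − ψ(P), B⟩_F = 0` equals
`|⟨ψ(X) − ψ(P), B⟩_F| / ∥B∥_F`, and this infimum is attained. -/
theorem dist_to_hypergyroplane_LC {n : ℕ} (P X B : Matrix (Fin n) (Fin n) ℝ)
    (hP : lowerPos P) (hX : lowerPos X)
    (hB : ∀ i j : Fin n, i < j → B i j = 0) (hB0 : B ≠ 0) :
    IsLeast
      {d : ℝ | ∃ Q : Matrix (Fin n) (Fin n) ℝ, lowerPos Q ∧
        frobInner (psiLT Q - psiLT P) B = 0 ∧ d = frobNorm (psiLT X - psiLT Q)}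
      (|frobInner (psiLT X - psiLT P) B| / frobNorm B) := by
  have hXT := mem_lowerTriangularSubmodule.mpr (psiLT_isLowerTriangular X)
  have hBT := mem_lowerTriangularSubmodule.mpr fun i j hij => hB i j hij
  simpa only [mem_lowerTriangularSubmodule, isLowerTriangular_iff_exists_psiLT_eq,
    exists_exists_and_eq_and] using isLeast_frobNorm_sub_hyperplane hXT hBT (psiLT P)
end
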